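/- In Aut(L) one has φ_{f₁} φ_{e₁} φ_{d₁} φ_{c₁} φ_{b₁} φ_{a} φ_{b₂} φ_{c₂} φ_{d₂} φ_{e₂}(f₂) = ω² a₃, where φ_r denotes the ω-reflection in the root r; this is the 'deflating' relation for the 12-gon (f₁, e₁, d₁, c₁, b₁, a, b₂, c₂, d₂, e₂, f₂, a₃) of the diagram D. -/

import Mathlib

noncomputable section

open ComplexConjugate

namespace Bimonster

/-- The primitive cube root of unity `ω = e^{2πi/3}`. -/
def ω : ℂ := Complex.exp (2 * (Real.pi : ℂ) * Complex.I / 3)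

/-- `θ = ω - ω̄ = √-3`. -/
def θ : ℂ := ω - conj ω

/-- `ξ = e^{-πi/6}`. -/
def ξ : ℂ := Complex.exp (-((Real.pi : ℂ) * Complex.I) / 6)

/-- Membership in the ring of Eisenstein integers `ℰ = ℤ[ω] ⊆ ℂ`. -/
def EisP (z : ℂ) : Prop := ∃ a b : ℤ, z = (a : ℂ) + (b : ℂ) * ω

/-- The units of the ring of Eisenstein integers. -/
def EisUnit (z : ℂ) : Prop :=
  z = 1 ∨ z = -1 ∨ z = ω ∨ z = -ω ∨ z = ω ^ 2 ∨ z = -ω ^ 2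

/-- The underlying 14-dimensional complex vector space of `L = 3E₈ ⊕ H`. -/
abbrev V : Type := Fin 14 → ℂ

/-- The Hermitian form of `L = 3E₈ ⊕ H`: negative definite standard form on the twelve
`E₈`-coordinates, and the hyperbolic cell with Gram matrix `[[0, θ̄], [θ, 0]]` on the
last two coordinates.  It is conjugate-linear in the first variable. -/
def herm (u v : V) : ℂ :=
  -(∑ i : Fin 12, conj (u (Fin.castLE (by norm_num) i)) * v (Fin.castLE (by norm_num) i)) +
    conj (u 12) * conj θ * v 13 + conj (u 13) * θ * v 12

/-- First generator of the ternary tetracode `𝒞₄ ⊆ 𝔽₃⁴`. -/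
def tet1 : Fin 4 → ℤ := ![1, 1, -1, 0]

/-- Second generator of the ternary tetracode `𝒞₄ ⊆ 𝔽₃⁴`. -/
def tet2 : Fin 4 → ℤ := ![0, 1, 1, 1]

/-- The complex `E₈` lattice: vectors of `ℰ⁴` whose reduction mod `θ` lies in the
ternary tetracode. -/
def inE8 (w : Fin 4 → ℂ) : Prop :=
  (∀ i, EisP (w i)) ∧
    ∃ s t : ℤ, ∀ i : Fin 4, ∃ a b : ℤ,
      w i - ((tet1 i * s + tet2 i * t : ℤ) : ℂ) = θ * ((a : ℂ) + (b : ℂ) * ω)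

/-- The lattice `L = 3E₈ ⊕ H` as a subset of `ℂ¹⁴`. -/
def Lset : Set V :=
  {v | (∀ k : Fin 3,
      inE8 fun i : Fin 4 =>
        v ⟨4 * (k : ℕ) + (i : ℕ), by have hk := k.isLt; have hi := i.isLt; omega⟩) ∧
    EisP (v 12) ∧ EisP (v 13)}

/-- A root of `L`: a primitive lattice vector of norm `-3`. -/
def IsRoot (r : V) : Prop :=
  r ∈ Lset ∧ herm r r = -3 ∧
    ∀ α : ℂ, EisP α → ∀ y ∈ Lset, r = α • y → EisUnit α

/-- The `μ`-reflection in a vector `r`: `v ↦ v − (1−μ)·r·⟨r,v⟩/|r|²`. -/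
def reflMap (μ : ℂ) (r v : V) : V := v - ((1 - μ) * herm r v / herm r r) • r

/-- The automorphism group of the lattice `L`: invertible `ℂ`-linear maps preserving
the lattice and the Hermitian form. -/
def AutL : Subgroup (V ≃ₗ[ℂ] V) where
  carrier := {g | (∀ v : V, v ∈ Lset ↔ g v ∈ Lset) ∧ ∀ u v : V, herm (g u) (g v) = herm u v}
  one_mem' := ⟨fun _ => Iff.rfl, fun _ _ => rfl⟩
  mul_mem' := by
    rintro f g ⟨hf1, hf2⟩ ⟨hg1, hg2⟩
    refine ⟨fun v => ?_, fun u v => ?_⟩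
    · exact (hg1 v).trans (hf1 (g v))
    · exact (hf2 (g u) (g v)).trans (hg2 u v)
  inv_mem' := by
    rintro g ⟨hg1, hg2⟩
    refine ⟨fun v => ?_, fun u v => ?_⟩
    · have h := hg1 (g.symm v)
      have hv : g (g.symm v) = v := g.apply_symm_apply v
      rw [hv] at h
      exact h.symm
    · have h := hg2 (g.symm u) (g.symm v)
      have hu : g (g.symm u) = u := g.apply_symm_apply u
      have hv : g (g.symm v) = v := g.apply_symm_apply v
      rw [hu, hv] at h
      exact h.symm

/-- The set of elements of `Aut(L)` acting as the `ω`-reflection in some root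
belonging to `S`. -/
def ReflAutos (S : Set V) : Set (V ≃ₗ[ℂ] V) :=
  {g | g ∈ AutL ∧ ∃ r ∈ S, ∀ v, g v = reflMap ω r v}

/-- The reflection group `R(L)`: the subgroup of `Aut(L)` generated by the
`ω`-reflections in all roots of `L`. -/
def RL : Subgroup (V ≃ₗ[ℂ] V) := Subgroup.closure (ReflAutos {r | IsRoot r})

/-- Two roots are adjacent when `|⟨a,b⟩| = √3`, i.e. when their `ω`-reflections braid. -/
def Adj (a b : V) : Prop := ‖herm a b‖ = Real.sqrt 3

/-- A set of roots is connected if the graph given by adjacency on it is connected. -/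
def ConnectedSet (Φ : Set V) : Prop :=
  ∀ a ∈ Φ, ∀ b ∈ Φ, Relation.ReflTransGen (fun x y => x ∈ Φ ∧ y ∈ Φ ∧ Adj x y) a b

/-- `Rad Φ` is the radical of a set `Φ` of roots: the closure of `Φ` under reflecting
members of the set in each other (and identification of unit multiples). -/
inductive Rad (Φ : Set V) : V → Prop
  | base {r : V} : r ∈ Φ → Rad Φ r
  | refl {a b : V} : Rad Φ a → Rad Φ b → Rad Φ (reflMap ω a b)
  | inv {a b : V} : Rad Φ a → Rad Φ b → Rad Φ (reflMap (conj ω) a b)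
  | unit {u : ℂ} {r : V} : EisUnit u → Rad Φ r → Rad Φ (u • r)

/-- Shorthand for the entry `-θω²` occurring in the coordinates of the 26 roots. -/
def qc : ℂ := -(θ * ω ^ 2)

/- The 26 roots of the diagram `D` in the coordinate system `3E₈ ⊕ H`. -/

def rA : V := ![0, 0, 0, 0, 0, 0, 0, 0, 0, 0, 0, 0, 1, ω ^ 2]
def rC1 : V := ![qc, 0, 0, 0, 0, 0, 0, 0, 0, 0, 0, 0, 0, 0]
def rC2 : V := ![0, 0, 0, 0, qc, 0, 0, 0, 0, 0, 0, 0, 0, 0]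
def rC3 : V := ![0, 0, 0, 0, 0, 0, 0, 0, qc, 0, 0, 0, 0, 0]
def rE1 : V := ![0, qc, 0, 0, 0, 0, 0, 0, 0, 0, 0, 0, 0, 0]
def rE2 : V := ![0, 0, 0, 0, 0, qc, 0, 0, 0, 0, 0, 0, 0, 0]
def rE3 : V := ![0, 0, 0, 0, 0, 0, 0, 0, 0, qc, 0, 0, 0, 0]
def rA1 : V := ![0, 0, 0, 0, 0, 0, 0, qc, 0, 0, 0, qc, ω, ω ^ 2]
def rA2 : V := ![0, 0, 0, qc, 0, 0, 0, 0, 0, 0, 0, qc, ω, ω ^ 2]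
def rA3 : V := ![0, 0, 0, qc, 0, 0, 0, qc, 0, 0, 0, 0, ω, ω ^ 2]
def rG1 : V := ![0, 0, 0, qc, 0, 0, -qc, qc, 0, 0, -qc, qc, 2 * ω, 2 * ω ^ 2]
def rG2 : V := ![0, 0, -qc, qc, 0, 0, 0, qc, 0, 0, -qc, qc, 2 * ω, 2 * ω ^ 2]
def rG3 : V := ![0, 0, -qc, qc, 0, 0, -qc, qc, 0, 0, 0, qc, 2 * ω, 2 * ω ^ 2]
def rF : V := ![0, 1, 1, -2, 0, 1, 1, -2, 0, 1, 1, -2, -2 + ω, -θ]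
def rB1 : V := ![1, 0, 1, -1, 0, 0, 0, 0, 0, 0, 0, 0, -1, 0]
def rB2 : V := ![0, 0, 0, 0, 1, 0, 1, -1, 0, 0, 0, 0, -1, 0]
def rB3 : V := ![0, 0, 0, 0, 0, 0, 0, 0, 1, 0, 1, -1, -1, 0]
def rD1 : V := ![1, 1, -1, 0, 0, 0, 0, 0, 0, 0, 0, 0, 0, 0]
def rD2 : V := ![0, 0, 0, 0, 1, 1, -1, 0, 0, 0, 0, 0, 0, 0]
def rD3 : V := ![0, 0, 0, 0, 0, 0, 0, 0, 1, 1, -1, 0, 0, 0]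
def rF1 : V := ![0, 1, 1, 1, 0, 0, 0, 0, 0, 0, 0, 0, 0, 0]
def rF2 : V := ![0, 0, 0, 0, 0, 1, 1, 1, 0, 0, 0, 0, 0, 0]
def rF3 : V := ![0, 0, 0, 0, 0, 0, 0, 0, 0, 1, 1, 1, 0, 0]
def rZ1 : V := ![0, 1, 1, -2, 1, 0, 1, -1, 1, 0, 1, -1, qc, -θ]
def rZ2 : V := ![1, 0, 1, -1, 0, 1, 1, -2, 1, 0, 1, -1, qc, -θ]
def rZ3 : V := ![1, 0, 1, -1, 1, 0, 1, -1, 0, 1, 1, -2, qc, -θ]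

/-- The 13 roots of `D` labelled by the points of `P²(𝔽₃)`. -/
def pt : Fin 13 → V :=
  ![rA, rC1, rC2, rC3, rE1, rE2, rE3, rA1, rA2, rA3, rG1, rG2, rG3]

/-- The 13 roots of `D` labelled by the lines of `P²(𝔽₃)`. -/
def lnr : Fin 13 → V :=
  ![rF, rB1, rB2, rB3, rD1, rD2, rD3, rF1, rF2, rF3, rZ1, rZ2, rZ3]

/-- The 26 roots of the diagram `D` (the incidence graph of `P²(𝔽₃)`). -/
def D26 : Set V := Set.range pt ∪ Set.range lnr

/-- The 16 roots forming the `M₆₆₆` diagram. -/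
def M16 : Set V :=
  Set.range
    (![rA, rB1, rB2, rB3, rC1, rC2, rC3, rD1, rD2, rD3, rE1, rE2, rE3, rF1, rF2, rF3] :
      Fin 16 → V)

/-- The 26 vectors `(ρ₁,…,ρ₂₆) = (x₁,…,x₁₃, ξl₁,…,ξl₁₃)`. -/
def ρv : Fin 26 → V := fun i =>
  if h : (i : ℕ) < 13 then pt ⟨(i : ℕ), h⟩
  else ξ • lnr ⟨(i : ℕ) - 13, by have := i.isLt; omega⟩

/-- The Weyl vector `ρ̄ = (Σ points + ξ Σ lines)/26`. -/
def ρbar : V := (26 : ℂ)⁻¹ • ((∑ i : Fin 13, pt i) + ξ • ∑ i : Fin 13, lnr i)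

/-- The height of a root: `ht(r) = |⟨ρ̄, r⟩| / |ρ̄|²`. -/
def ht (r : V) : ℝ := ‖herm ρbar r‖ / ‖herm ρbar ρbar‖

set_option linter.all false

lemma conj_two' : conj (2 : ℂ) = 2 := Complex.conj_ofNat 2

lemma ω_prim : IsPrimitiveRoot ω 3 := by
  have := Complex.isPrimitiveRoot_exp 3 (by norm_num)
  simpa [ω] using this

lemma ω_sq : ω ^ 2 = -1 - ω := by
  have h3 : ω ^ 3 = 1 := by
    rw [ω, ← Complex.exp_nat_mul]
    convert Complex.exp_two_pi_mul_I using 2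
    push_cast; ring
  have h1 : ω ≠ 1 := by
    intro h
    have := ω_prim.ne_one (by norm_num)
    exact this h
  have : (ω - 1) * (ω ^ 2 + ω + 1) = 0 := by linear_combination h3
  rcases mul_eq_zero.mp this with h | h
  · exact absurd (sub_eq_zero.mp h) h1
  · linear_combination h

lemma conj_ω : conj ω = -1 - ω := by
  have h : ω * conj ω = 1 := by
    rw [Complex.mul_conj, Complex.normSq_eq_norm_sq, ω_prim.norm'_eq_one (by norm_num)]
    simp
  have h2 := ω_sq
  have h0 : ω ≠ 0 := ω_prim.ne_zero (by norm_num)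
  apply mul_left_cancel₀ h0
  linear_combination h + h2

lemma θ_eq : θ = 1 + 2 * ω := by rw [θ, conj_ω]; ring

lemma qc_eq : qc = -1 + ω := by
  rw [qc, θ_eq]; linear_combination (-3 + 2 * 1 - 2 * ω + 2) * ω_sq

lemma refl_step {r v w : V} (h : ℂ) (hr : herm r r = -3) (hv : herm r v = h)
    (hw : ∀ i, w i = v i + (1 - ω) * h / 3 * r i) : reflMap ω r v = w := by
  funext i
  rw [hw, reflMap, hr, hv]
  simp only [Pi.sub_apply, Pi.smul_apply, smul_eq_mul]
  ring

lemma stepE2 : reflMap ω rE2 rF2 =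
    ![0, 0, 0, 0, 0, (0) + (1) * ω, 1, 1, 0, 0, 0, 0, 0, 0] := by
  apply refl_step ((2) + (1) * ω)
  · simp [herm, Fin.sum_univ_succ, Fin.castLE, rE2, rF2, conj_ω, conj_two', θ_eq, qc_eq, ω_sq] <;> grind [ω_sq]
  · simp [herm, Fin.sum_univ_succ, Fin.castLE, rE2, rF2, conj_ω, conj_two', θ_eq, qc_eq, ω_sq] <;> grind [ω_sq]
  · intro i; fin_cases i <;> simp [rE2, rF2, qc_eq, ω_sq] <;> grind [ω_sq]

lemma stepD2 : reflMap ω rD2 ![0, 0, 0, 0, 0, (0) + (1) * ω, 1, 1, 0, 0, 0, 0, 0, 0] =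
    ![0, 0, 0, 0, (0) + (-1) * ω, 0, (1) + (1) * ω, 1, 0, 0, 0, 0, 0, 0] := by
  apply refl_step ((1) + (-1) * ω)
  · simp [herm, Fin.sum_univ_succ, Fin.castLE, rD2, rF2, conj_ω, conj_two', θ_eq, qc_eq, ω_sq] <;> grind [ω_sq]
  · simp [herm, Fin.sum_univ_succ, Fin.castLE, rD2, rF2, conj_ω, conj_two', θ_eq, qc_eq, ω_sq] <;> grind [ω_sq]
  · intro i; fin_cases i <;> simp [rD2, rF2, qc_eq, ω_sq] <;> grind [ω_sq]

lemma stepC2 : reflMap ω rC2 ![0, 0, 0, 0, (0) + (-1) * ω, 0, (1) + (1) * ω, 1, 0, 0, 0, 0, 0, 0] =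
    ![0, 0, 0, 0, (1) + (1) * ω, 0, (1) + (1) * ω, 1, 0, 0, 0, 0, 0, 0] := by
  apply refl_step ((1) + (-1) * ω)
  · simp [herm, Fin.sum_univ_succ, Fin.castLE, rC2, rF2, conj_ω, conj_two', θ_eq, qc_eq, ω_sq] <;> grind [ω_sq]
  · simp [herm, Fin.sum_univ_succ, Fin.castLE, rC2, rF2, conj_ω, conj_two', θ_eq, qc_eq, ω_sq] <;> grind [ω_sq]
  · intro i; fin_cases i <;> simp [rC2, rF2, qc_eq, ω_sq] <;> grind [ω_sq]

lemma stepB2 : reflMap ω rB2 ![0, 0, 0, 0, (1) + (1) * ω, 0, (1) + (1) * ω, 1, 0, 0, 0, 0, 0, 0] =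
    ![0, 0, 0, 0, 0, 0, 0, (2) + (1) * ω, 0, 0, 0, 0, (1) + (1) * ω, 0] := by
  apply refl_step ((-1) + (-2) * ω)
  · simp [herm, Fin.sum_univ_succ, Fin.castLE, rB2, rF2, conj_ω, conj_two', θ_eq, qc_eq, ω_sq] <;> grind [ω_sq]
  · simp [herm, Fin.sum_univ_succ, Fin.castLE, rB2, rF2, conj_ω, conj_two', θ_eq, qc_eq, ω_sq] <;> grind [ω_sq]
  · intro i; fin_cases i <;> simp [rB2, rF2, qc_eq, ω_sq] <;> grind [ω_sq]

lemma stepA : reflMap ω rA ![0, 0, 0, 0, 0, 0, 0, (2) + (1) * ω, 0, 0, 0, 0, (1) + (1) * ω, 0] =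
    ![0, 0, 0, 0, 0, 0, 0, (2) + (1) * ω, 0, 0, 0, 0, 0, (0) + (1) * ω] := by
  apply refl_step ((-1) + (-2) * ω)
  · simp [herm, Fin.sum_univ_succ, Fin.castLE, rA, rF2, conj_ω, conj_two', θ_eq, qc_eq, ω_sq] <;> grind [ω_sq]
  · simp [herm, Fin.sum_univ_succ, Fin.castLE, rA, rF2, conj_ω, conj_two', θ_eq, qc_eq, ω_sq] <;> grind [ω_sq]
  · intro i; fin_cases i <;> simp [rA, rF2, qc_eq, ω_sq] <;> grind [ω_sq]

lemma stepB1 : reflMap ω rB1 ![0, 0, 0, 0, 0, 0, 0, (2) + (1) * ω, 0, 0, 0, 0, 0, (0) + (1) * ω] =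
    ![-1, 0, -1, 1, 0, 0, 0, (2) + (1) * ω, 0, 0, 0, 0, 1, (0) + (1) * ω] := by
  apply refl_step ((-2) + (-1) * ω)
  · simp [herm, Fin.sum_univ_succ, Fin.castLE, rB1, rF2, conj_ω, conj_two', θ_eq, qc_eq, ω_sq] <;> grind [ω_sq]
  · simp [herm, Fin.sum_univ_succ, Fin.castLE, rB1, rF2, conj_ω, conj_two', θ_eq, qc_eq, ω_sq] <;> grind [ω_sq]
  · intro i; fin_cases i <;> simp [rB1, rF2, qc_eq, ω_sq] <;> grind [ω_sq]

lemma stepC1 : reflMap ω rC1 ![-1, 0, -1, 1, 0, 0, 0, (2) + (1) * ω, 0, 0, 0, 0, 1, (0) + (1) * ω] =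
    ![(0) + (-1) * ω, 0, -1, 1, 0, 0, 0, (2) + (1) * ω, 0, 0, 0, 0, 1, (0) + (1) * ω] := by
  apply refl_step ((-2) + (-1) * ω)
  · simp [herm, Fin.sum_univ_succ, Fin.castLE, rC1, rF2, conj_ω, conj_two', θ_eq, qc_eq, ω_sq] <;> grind [ω_sq]
  · simp [herm, Fin.sum_univ_succ, Fin.castLE, rC1, rF2, conj_ω, conj_two', θ_eq, qc_eq, ω_sq] <;> grind [ω_sq]
  · intro i; fin_cases i <;> simp [rC1, rF2, qc_eq, ω_sq] <;> grind [ω_sq]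

lemma stepD1 : reflMap ω rD1 ![(0) + (-1) * ω, 0, -1, 1, 0, 0, 0, (2) + (1) * ω, 0, 0, 0, 0, 1, (0) + (1) * ω] =
    ![0, (0) + (1) * ω, (-1) + (-1) * ω, 1, 0, 0, 0, (2) + (1) * ω, 0, 0, 0, 0, 1, (0) + (1) * ω] := by
  apply refl_step ((-1) + (1) * ω)
  · simp [herm, Fin.sum_univ_succ, Fin.castLE, rD1, rF2, conj_ω, conj_two', θ_eq, qc_eq, ω_sq] <;> grind [ω_sq]
  · simp [herm, Fin.sum_univ_succ, Fin.castLE, rD1, rF2, conj_ω, conj_two', θ_eq, qc_eq, ω_sq] <;> grind [ω_sq]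
  · intro i; fin_cases i <;> simp [rD1, rF2, qc_eq, ω_sq] <;> grind [ω_sq]

lemma stepE1 : reflMap ω rE1 ![0, (0) + (1) * ω, (-1) + (-1) * ω, 1, 0, 0, 0, (2) + (1) * ω, 0, 0, 0, 0, 1, (0) + (1) * ω] =
    ![0, (-1) + (-1) * ω, (-1) + (-1) * ω, 1, 0, 0, 0, (2) + (1) * ω, 0, 0, 0, 0, 1, (0) + (1) * ω] := by
  apply refl_step ((-1) + (1) * ω)
  · simp [herm, Fin.sum_univ_succ, Fin.castLE, rE1, rF2, conj_ω, conj_two', θ_eq, qc_eq, ω_sq] <;> grind [ω_sq]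
  · simp [herm, Fin.sum_univ_succ, Fin.castLE, rE1, rF2, conj_ω, conj_two', θ_eq, qc_eq, ω_sq] <;> grind [ω_sq]
  · intro i; fin_cases i <;> simp [rE1, rF2, qc_eq, ω_sq] <;> grind [ω_sq]

lemma stepF1 : reflMap ω rF1 ![0, (-1) + (-1) * ω, (-1) + (-1) * ω, 1, 0, 0, 0, (2) + (1) * ω, 0, 0, 0, 0, 1, (0) + (1) * ω] =
    ![0, 0, 0, (2) + (1) * ω, 0, 0, 0, (2) + (1) * ω, 0, 0, 0, 0, 1, (0) + (1) * ω] := by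
  apply refl_step ((1) + (2) * ω)
  · simp [herm, Fin.sum_univ_succ, Fin.castLE, rF1, rF2, conj_ω, conj_two', θ_eq, qc_eq, ω_sq] <;> grind [ω_sq]
  · simp [herm, Fin.sum_univ_succ, Fin.castLE, rF1, rF2, conj_ω, conj_two', θ_eq, qc_eq, ω_sq] <;> grind [ω_sq]
  · intro i; fin_cases i <;> simp [rF1, rF2, qc_eq, ω_sq] <;> grind [ω_sq]

theorem stmt19 :
    reflMap ω rF1 (reflMap ω rE1 (reflMap ω rD1 (reflMap ω rC1 (reflMap ω rB1
      (reflMap ω rA (reflMap ω rB2 (reflMap ω rC2 (reflMap ω rD2 (reflMap ω rE2 rF2))))))))) =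
      ω ^ 2 • rA3 := by
  rw [stepE2, stepD2, stepC2, stepB2, stepA, stepB1, stepC1, stepD1, stepE1, stepF1]
  funext i; fin_cases i <;> simp [rA3, qc_eq, ω_sq] <;> grind [ω_sq]

end Bimonster
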